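/- Let $(p_i)_{i \in \mathbb{Z}}$ be real numbers with $p_i \in [i, i + 1/3]$ for every $i \in \mathbb{Z}$, let $P = \{p_i : i \in \mathbb{Z}\}$, and let $G$ be the simple graph on $P$ whose edges are exactly the pairs $\{p_i, p_{i+1}\}$, $i \in \mathbb{Z}$. Then $G$ is a stable multi-matching in which every vertex has degree exactly $2$, and $G$ is connected (hence has an infinite connected component). -/

import Mathlib

/-- `G` is a stable multi-matching on `P ⊆ ℝ`: for any two distinct points, either they are
adjacent, or one of them has no incident edge longer than the distance between them. -/
def IsStableMultiMatching (P : Set ℝ) (G : SimpleGraph P) : Prop :=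
  ∀ x y : P, x ≠ y →
    G.Adj x y ∨
    (∀ z : P, G.Adj x z → |(z : ℝ) - (x : ℝ)| ≤ |(y : ℝ) - (x : ℝ)|) ∨
    (∀ z : P, G.Adj y z → |(z : ℝ) - (y : ℝ)| ≤ |(y : ℝ) - (x : ℝ)|)

/-!
Labelling the points by `ℤ` identifies `G` with the Hasse diagram of `ℤ`, which is connected and
2-regular. For stability, consider non-adjacent points `p i < p j`: as `i + 2 ≤ j`, the gap to the
right of `p i` is at most `p j - p i`, and the gap to its left is too as soon as no gap exceeds the
sum of the next two. If `p i ∈ [i, i + 1/3]`, all gaps lie in `[2/3, 4/3]`, so this is the case.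
-/

open SimpleGraph Order

section Hasse

variable {ι : Type*} [PartialOrder ι]

theorem neighborSet_hasse [SuccOrder ι] [PredOrder ι] [NoMaxOrder ι] [NoMinOrder ι] (a : ι) :
    (hasse ι).neighborSet a = {pred a, succ a} := by
  ext b
  simp only [mem_neighborSet, hasse_adj, Set.mem_insert_iff, Set.mem_singleton_iff,
    eq_comm (a := b)]
  rw [succ_eq_iff_covBy, pred_eq_iff_covBy, or_comm]

theorem ncard_neighborSet_hasse [SuccOrder ι] [PredOrder ι] [NoMaxOrder ι] [NoMinOrder ι]
    (a : ι) : ((hasse ι).neighborSet a).ncard = 2 := by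
  rw [neighborSet_hasse]
  exact Set.ncard_pair ((pred_lt a).trans (lt_succ a)).ne

variable [Add ι] [One ι] [SuccAddOrder ι] [NoMaxOrder ι]

theorem hasse_adj_iff_exists_add_one {a b : ι} :
    (hasse ι).Adj a b ↔ ∃ i, (a = i ∧ b = i + 1) ∨ (a = i + 1 ∧ b = i) := by
  simp only [hasse_adj, covBy_iff_add_one_eq, exists_or, exists_eq_left', exists_eq_right',
    eq_comm]

/-- The labelling `i ↦ p i` as an isomorphism onto a graph on the range of `p` whose edges are the
pairs `{p i, p (i + 1)}`, through which graph properties of the Hasse diagram are transported. The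
adjacency hypothesis compares points of `α`, as vertices are elements of a subtype. -/
noncomputable def hasseIsoOfAdjIff {α : Type*} {p : ι → α} (hp : Function.Injective p)
    {G : SimpleGraph (Set.range p)}
    (hG : ∀ u v : Set.range p, G.Adj u v ↔ ∃ i,
      ((u : α) = p i ∧ (v : α) = p (i + 1)) ∨ ((u : α) = p (i + 1) ∧ (v : α) = p i)) :
    hasse ι ≃g G where
  toEquiv := Equiv.ofInjective p hp
  map_rel_iff' := by
    simp only [hG, Equiv.ofInjective_apply, hp.eq_iff, hasse_adj_iff_exists_add_one, implies_true]

end Hasse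

theorem isStableMultiMatching_of_lt {P : Set ℝ} {G : SimpleGraph P}
    (h : ∀ x y : P, (x : ℝ) < y → ¬G.Adj x y →
      (∀ z : P, G.Adj x z → |(z : ℝ) - x| ≤ (y : ℝ) - x) ∨
      (∀ z : P, G.Adj y z → |(z : ℝ) - y| ≤ (y : ℝ) - x)) :
    IsStableMultiMatching P G := by
  intro x y hxy
  refine or_iff_not_imp_left.2 fun hadj => ?_
  rcases lt_or_gt_of_ne (Subtype.coe_ne_coe.2 hxy) with hlt | hlt
  · rw [abs_of_pos (sub_pos.2 hlt)]
    exact h x y hlt hadj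
  · rw [abs_sub_comm, abs_of_pos (sub_pos.2 hlt)]
    exact (h y x hlt (mt Adj.symm hadj)).symm

section Gaps

variable {p : ℤ → ℝ}

theorem abs_sub_le_of_hasse_adj (hp : StrictMono p)
    (hgap : ∀ i, p (i + 1) - p i ≤ p (i + 3) - p (i + 1)) {i j k : ℤ} (hij : i + 2 ≤ j)
    (hik : (hasse ℤ).Adj i k) : |p k - p i| ≤ p j - p i := by
  have hj : p (i + 2) ≤ p j := hp.monotone hij
  rw [← mem_neighborSet, neighborSet_hasse] at hik
  rcases hik with rfl | rfl
  · have hleft : p i - p (i - 1) ≤ p (i + 2) - p i := by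
      convert hgap (i - 1) using 3 <;> ring
    have hlt : p (i - 1) < p i := hp (sub_one_lt i)
    rw [pred_eq_sub_one, abs_of_neg (sub_neg.2 hlt)]
    linarith
  · have hlt : p i < p (i + 1) := hp (lt_add_one i)
    have hle : p (i + 1) ≤ p (i + 2) := hp.monotone (by lia)
    rw [succ_eq_add_one, abs_of_pos (sub_pos.2 hlt)]
    linarith

theorem isStableMultiMatching_of_hasse_iso (hp : StrictMono p)
    (hgap : ∀ i, p (i + 1) - p i ≤ p (i + 3) - p (i + 1)) {P : Set ℝ} {G : SimpleGraph P}
    (φ : hasse ℤ ≃g G) (hφ : ∀ i, (φ i : ℝ) = p i) : IsStableMultiMatching P G := by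
  refine isStableMultiMatching_of_lt fun x y hxy hadj => Or.inl fun z hxz => ?_
  obtain ⟨i, rfl⟩ := φ.surjective x
  obtain ⟨j, rfl⟩ := φ.surjective y
  obtain ⟨k, rfl⟩ := φ.surjective z
  rw [φ.map_adj_iff] at hadj hxz
  simp only [hφ] at hxy ⊢
  have hlt : i < j := hp.lt_iff_lt.1 hxy
  have hne : i + 1 ≠ j := fun h => hadj (Or.inl (covBy_iff_add_one_eq.2 h))
  exact abs_sub_le_of_hasse_adj hp hgap (by lia) hxz

variable {r : ℝ}

theorem strictMono_of_mem_Icc_add (hr : r < 1)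
    (hp : ∀ i : ℤ, p i ∈ Set.Icc (i : ℝ) (i + r)) : StrictMono p := by
  refine strictMono_int_of_lt_succ fun i => ?_
  have hsucc := (hp (i + 1)).1
  push_cast at hsucc
  linarith [(hp i).2]

theorem sub_le_sub_of_mem_Icc_add (hr : r ≤ 1 / 3)
    (hp : ∀ i : ℤ, p i ∈ Set.Icc (i : ℝ) (i + r)) (i : ℤ) :
    p (i + 1) - p i ≤ p (i + 3) - p (i + 1) := by
  have hsucc := (hp (i + 1)).2
  have hthird := (hp (i + 3)).1
  push_cast at hsucc hthird
  linarith [(hp i).1]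

end Gaps

theorem percolating_example_general
    (p : ℤ → ℝ) (hp : StrictMono p)
    (hgap : ∀ i, p (i + 1) - p i ≤ p (i + 3) - p (i + 1))
    (P : Set ℝ) (hP : P = Set.range p)
    (G : SimpleGraph P)
    (hG : ∀ u v : P, G.Adj u v ↔ ∃ i : ℤ,
      ((u : ℝ) = p i ∧ (v : ℝ) = p (i + 1)) ∨ ((u : ℝ) = p (i + 1) ∧ (v : ℝ) = p i)) :
    IsStableMultiMatching P G ∧ (∀ x : P, {y : P | G.Adj x y}.ncard = 2) ∧ G.Connected := by
  subst hP
  let φ : hasse ℤ ≃g G := hasseIsoOfAdjIff hp.injective hG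
  refine ⟨isStableMultiMatching_of_hasse_iso hp hgap φ fun _ => rfl, fun x => ?_,
    φ.connected_iff.1 ⟨hasse_preconnected_of_succ ℤ⟩⟩
  obtain ⟨i, rfl⟩ := φ.surjective x
  exact (Nat.card_congr (φ.mapNeighborSet i)).symm.trans (ncard_neighborSet_hasse i)

/-- Example 3: if `p i ∈ [i, i + 1/3]` for each `i ∈ ℤ`, `P = {p i}`, and `G` is the graph on
`P` whose edges are exactly the pairs `{p i, p (i+1)}`, then `G` is a 2-regular stable
multi-matching and `G` is connected (hence has an infinite component). -/
theorem percolating_example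
    (p : ℤ → ℝ) (hp : ∀ i : ℤ, p i ∈ Set.Icc (i : ℝ) ((i : ℝ) + 1 / 3))
    (P : Set ℝ) (hP : P = Set.range p)
    (G : SimpleGraph P)
    (hG : ∀ u v : P, G.Adj u v ↔ ∃ i : ℤ,
      ((u : ℝ) = p i ∧ (v : ℝ) = p (i + 1)) ∨ ((u : ℝ) = p (i + 1) ∧ (v : ℝ) = p i)) :
    IsStableMultiMatching P G ∧ (∀ x : P, {y : P | G.Adj x y}.ncard = 2) ∧ G.Connected := by
  exact percolating_example_general p (strictMono_of_mem_Icc_add (by norm_num) hp)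
    (sub_le_sub_of_mem_Icc_add le_rfl hp) P hP G hG
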